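/- arXiv:1403.2425 — 5 statements merged into one kernel-verified Lean document; each statement's English description precedes it below -/
import Mathlib

section
/- For every g ∈ S, the transitivity set H(g) = { l ∈ L : g·l is reachable from g } is a subgroup of L. -/
/-- `g'` is reachable from `g`: there is a finite sequence `h₁, …, h_k` of elements of
`N⁻ ∪ N⁺` and `γ ∈ Γ` such that all the partial products `g·h₁⋯h_r` lie in `S`
and `γ·g·h₁⋯h_k = g'`. -/
def Reachable {G : Type*} [Group G] (Γ Nm Np : Subgroup G) (S : Set G) (g g' : G) : Prop :=
  ∃ hs : List G, (∀ h ∈ hs, h ∈ (↑Nm ∪ ↑Np : Set G)) ∧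
    (∀ r ≤ hs.length, g * (hs.take r).prod ∈ S) ∧
    ∃ γ ∈ Γ, γ * (g * hs.prod) = g'

/-- elementary moves -/
def RStep {G : Type*} [Group G] (Γ Nm Np : Subgroup G) (S : Set G) (a b : G) : Prop :=
  a ∈ S ∧ b ∈ S ∧ ((∃ n, (n ∈ Nm ∨ n ∈ Np) ∧ b = a * n) ∨ ∃ γ ∈ Γ, b = γ * a)

theorem reach_to {G : Type*} [Group G] {Γ Nm Np : Subgroup G} {S : Set G}
    (hSΓ : ∀ s ∈ S, ∀ γ ∈ Γ, γ * s ∈ S) {g g' : G}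
    (h : Reachable Γ Nm Np S g g') : Relation.ReflTransGen (RStep Γ Nm Np S) g g' := by
  obtain ⟨hs, h1, h2, γ, hγ, h3⟩ := h
  induction hs generalizing g with
  | nil =>
    have hg : g ∈ S := by simpa using h2 0 (by simp)
    have h3' : g' = γ * g := by simpa using h3.symm
    subst h3'
    exact Relation.ReflTransGen.single ⟨hg, hSΓ _ hg _ hγ, Or.inr ⟨γ, hγ, rfl⟩⟩
  | cons n t ih =>
    have hg : g ∈ S := by simpa using h2 0 (by simp)
    have hg1 : g * n ∈ S := by simpa using h2 1 (by simp)
    refine Relation.ReflTransGen.head (b := g * n)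
      ⟨hg, hg1, Or.inl ⟨n, by simpa using h1 n (by simp), rfl⟩⟩ (ih ?_ ?_ ?_)
    · intro h hh
      exact h1 h (by simp [hh])
    · intro r hr
      have := h2 (r + 1) (by simpa using hr)
      simpa [mul_assoc] using this
    · simpa [mul_assoc] using h3

theorem to_reach {G : Type*} [Group G] {Γ Nm Np : Subgroup G} {S : Set G}
    (hSΓ : ∀ s ∈ S, ∀ γ ∈ Γ, γ * s ∈ S) {g g' : G} (hg' : g' ∈ S)
    (h : Relation.ReflTransGen (RStep Γ Nm Np S) g g') : Reachable Γ Nm Np S g g' := by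
  induction h using Relation.ReflTransGen.head_induction_on with
  | refl => exact ⟨[], by simp, by simpa using hg', 1, Γ.one_mem, by simp⟩
  | head hab _ ih =>
    rename_i a b _
    obtain ⟨ha, hb, ⟨n, hn, rfl⟩ | ⟨δ, hδ, rfl⟩⟩ := hab
    · obtain ⟨hs, h1, h2, γ, hγ, h3⟩ := ih
      refine ⟨n :: hs, ?_, ?_, γ, hγ, ?_⟩
      · intro h hh
        rcases List.mem_cons.1 hh with rfl | hh
        · exact hn
        · exact h1 h hh
      · intro r hr
        cases r with
        | zero => simpa using ha
        | succ r =>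
          have := h2 r (by simpa using hr)
          simpa [mul_assoc] using this
      · simpa [mul_assoc] using h3
    · obtain ⟨hs, h1, h2, γ, hγ, h3⟩ := ih
      refine ⟨hs, h1, ?_, γ * δ, Γ.mul_mem hγ hδ, ?_⟩
      · intro r hr
        have := hSΓ _ (h2 r hr) _ (Γ.inv_mem hδ)
        simpa [mul_assoc] using this
      · simpa [mul_assoc] using h3

theorem rstep_symm {G : Type*} [Group G] {Γ Nm Np : Subgroup G} {S : Set G} {a b : G}
    (h : RStep Γ Nm Np S a b) : RStep Γ Nm Np S b a := by
  obtain ⟨ha, hb, ⟨n, hn, rfl⟩ | ⟨δ, hδ, rfl⟩⟩ := h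
  · exact ⟨hb, ha, Or.inl ⟨n⁻¹, hn.imp Nm.inv_mem Np.inv_mem, by simp⟩⟩
  · exact ⟨hb, ha, Or.inr ⟨δ⁻¹, Γ.inv_mem hδ, by simp⟩⟩

/-- For every `g ∈ S`, the transitivity set
`H(g) = { l ∈ L : g·l is reachable from g }` is a subgroup of `L`. -/
theorem transitivity_set_is_subgroup {G : Type*} [Group G]
    (Γ Nm Np L : Subgroup G) (S : Set G)
    (hnormm : ∀ l ∈ L, ∀ n ∈ Nm, l * n * l⁻¹ ∈ Nm)
    (hnormp : ∀ l ∈ L, ∀ n ∈ Np, l * n * l⁻¹ ∈ Np)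
    (hSΓ : ∀ s ∈ S, ∀ γ ∈ Γ, γ * s ∈ S)
    (hSL : ∀ s ∈ S, ∀ l ∈ L, s * l ∈ S)
    (g : G) (hg : g ∈ S) :
    ∃ H : Subgroup G, H ≤ L ∧
      (H : Set G) = {l : G | l ∈ L ∧ Reachable Γ Nm Np S g (g * l)} := by
  have tr : ∀ l ∈ L, ∀ a b, Relation.ReflTransGen (RStep Γ Nm Np S) a b →
      Relation.ReflTransGen (RStep Γ Nm Np S) (a * l) (b * l) := by
    intro l hl a b hab
    refine Relation.ReflTransGen.lift (fun x => x * l) ?_ _ _ hab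
    rintro x y ⟨hx, hy, ⟨n, hn, rfl⟩ | ⟨δ, hδ, rfl⟩⟩
    · refine ⟨hSL _ hx _ hl, hSL _ hy _ hl, Or.inl ⟨l⁻¹ * n * l, ?_, by group⟩⟩
      rcases hn with hn | hn
      · left
        simpa using hnormm l⁻¹ (L.inv_mem hl) n hn
      · right
        simpa using hnormp l⁻¹ (L.inv_mem hl) n hn
    · exact ⟨hSL _ hx _ hl, hSL _ hy _ hl, Or.inr ⟨δ, hδ, by simp [mul_assoc]⟩⟩
  have key : ∀ l ∈ L, (Reachable Γ Nm Np S g (g * l) ↔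
      Relation.ReflTransGen (RStep Γ Nm Np S) g (g * l)) :=
    fun l hl => ⟨reach_to hSΓ, to_reach hSΓ (hSL _ hg _ hl)⟩
  refine ⟨{ carrier := {l : G | l ∈ L ∧ Reachable Γ Nm Np S g (g * l)}
            mul_mem' := ?_
            one_mem' := ?_
            inv_mem' := ?_ }, fun l hl => hl.1, rfl⟩
  · rintro a b ⟨ha, ha'⟩ ⟨hb, hb'⟩
    refine ⟨L.mul_mem ha hb, (key _ (L.mul_mem ha hb)).2 ?_⟩
    have := tr b hb _ _ ((key a ha).1 ha')
    rw [mul_assoc] at this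
    exact ((key b hb).1 hb').trans this
  · refine ⟨L.one_mem, (key _ L.one_mem).2 ?_⟩
    rw [mul_one]
  · rintro a ⟨ha, ha'⟩
    refine ⟨L.inv_mem ha, (key _ (L.inv_mem ha)).2 ?_⟩
    have := tr a⁻¹ (L.inv_mem ha) _ _ ((key a ha).1 ha')
    rw [mul_inv_cancel_right] at this
    have hsym : Std.Symm (RStep Γ Nm Np S) := ⟨fun _ _ h => rstep_symm h⟩
    exact Std.Symm.symm (r := Relation.ReflTransGen (RStep Γ Nm Np S)) _ _ this
end

section
/- Let A be a subgroup of the center of L. If γ₀ ∈ Γ, u ∈ N⁻ ∪ N⁺ ∪ A, g ∈ S and γ₀·g·u ∈ S, then H(g) = H(γ₀·g·u); that is, the transitivity set is unchanged when the base point is moved by an element of Γ on the left and an element of N⁻ ∪ N⁺ ∪ A on the right. -/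
theorem Reachable.aux_left {G : Type*} [Group G] {Γ Nm Np : Subgroup G} {S : Set G}
    (hSΓ : ∀ s ∈ S, ∀ γ ∈ Γ, γ * s ∈ S) {g g' : G} (h : Reachable Γ Nm Np S g g')
    {c : G} (hc : c ∈ Γ) : Reachable Γ Nm Np S (c * g) (c * g') := by
  obtain ⟨hs, h1, h2, γ, hγ, rfl⟩ := h
  refine ⟨hs, h1, fun r hr => ?_, c * γ * c⁻¹, Γ.mul_mem (Γ.mul_mem hc hγ) (Γ.inv_mem hc), by group⟩
  rw [mul_assoc]
  exact hSΓ _ (h2 r hr) _ hc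

theorem Reachable.aux_cons {G : Type*} [Group G] {Γ Nm Np : Subgroup G} {S : Set G}
    {x y u : G} (hu : u ∈ (↑Nm ∪ ↑Np : Set G)) (hx : x ∈ S)
    (h : Reachable Γ Nm Np S (x * u) y) : Reachable Γ Nm Np S x y := by
  obtain ⟨hs, h1, h2, γ, hγ, rfl⟩ := h
  refine ⟨u :: hs, ?_, fun r hr => ?_, γ, hγ, by simp [mul_assoc]⟩
  · intro a ha
    rcases List.mem_cons.1 ha with rfl | ha
    · exact hu
    · exact h1 a ha
  · cases r with
    | zero => simpa using hx
    | succ r =>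
      have := h2 r (by simpa using hr)
      simpa [mul_assoc] using this

theorem Reachable.aux_snoc {G : Type*} [Group G] {Γ Nm Np : Subgroup G} {S : Set G}
    (hSΓ : ∀ s ∈ S, ∀ γ ∈ Γ, γ * s ∈ S)
    {x y u : G} (hu : u ∈ (↑Nm ∪ ↑Np : Set G)) (hy : y * u ∈ S)
    (h : Reachable Γ Nm Np S x y) : Reachable Γ Nm Np S x (y * u) := by
  obtain ⟨hs, h1, h2, γ, hγ, rfl⟩ := h
  refine ⟨hs ++ [u], ?_, fun r hr => ?_, γ, hγ, by simp [mul_assoc]⟩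
  · intro a ha
    rcases List.mem_append.1 ha with ha | ha
    · exact h1 a ha
    · rw [List.mem_singleton.1 ha]
      exact hu
  · by_cases hr' : r ≤ hs.length
    · rw [List.take_append_of_le_length hr']
      exact h2 r hr'
    · rw [List.take_of_length_le (by simp; omega)]
      have := hSΓ _ hy _ (Γ.inv_mem hγ)
      simpa [mul_assoc] using this

theorem Reachable.aux_right {G : Type*} [Group G] {Γ Nm Np L : Subgroup G} {S : Set G}
    (hnormm : ∀ l ∈ L, ∀ n ∈ Nm, l * n * l⁻¹ ∈ Nm)
    (hnormp : ∀ l ∈ L, ∀ n ∈ Np, l * n * l⁻¹ ∈ Np)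
    (hSL : ∀ s ∈ S, ∀ l ∈ L, s * l ∈ S)
    {x y l : G} (hl : l ∈ L)
    (h : Reachable Γ Nm Np S x y) : Reachable Γ Nm Np S (x * l) (y * l) := by
  obtain ⟨hs, h1, h2, γ, hγ, rfl⟩ := h
  have key : ∀ t : List G, (t.map (MulAut.conj l⁻¹)).prod = l⁻¹ * t.prod * l := by
    intro t
    rw [← map_list_prod]
    simp
  refine ⟨hs.map (MulAut.conj l⁻¹), ?_, fun r hr => ?_, γ, hγ, ?_⟩
  · intro a ha
    obtain ⟨b, hb, rfl⟩ := List.mem_map.1 ha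
    rw [MulAut.conj_apply]
    rcases h1 b hb with hb | hb
    · exact Or.inl (hnormm _ (L.inv_mem hl) _ hb)
    · exact Or.inr (hnormp _ (L.inv_mem hl) _ hb)
  · rw [← List.map_take, key]
    have := hSL _ (h2 r (by simpa using hr)) _ hl
    simpa [mul_assoc] using this
  · rw [key]
    group

theorem transitivity_aux {G : Type*} [Group G]
    (Γ Nm Np L A : Subgroup G) (S : Set G)
    (hnormm : ∀ l ∈ L, ∀ n ∈ Nm, l * n * l⁻¹ ∈ Nm)
    (hnormp : ∀ l ∈ L, ∀ n ∈ Np, l * n * l⁻¹ ∈ Np)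
    (hSΓ : ∀ s ∈ S, ∀ γ ∈ Γ, γ * s ∈ S)
    (hSL : ∀ s ∈ S, ∀ l ∈ L, s * l ∈ S)
    (hAL : A ≤ L) (hAcentral : ∀ a ∈ A, ∀ l ∈ L, a * l = l * a)
    (γ₀ : G) (hγ₀ : γ₀ ∈ Γ) (u : G) (hu : u ∈ (↑Nm ∪ ↑Np ∪ ↑A : Set G))
    (g : G) (hg' : γ₀ * g * u ∈ S) (l : G) (hl : l ∈ L)
    (h : Reachable Γ Nm Np S g (g * l)) :
    Reachable Γ Nm Np S (γ₀ * g * u) (γ₀ * g * u * l) := by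
  have hgu : g * u ∈ S := by
    have := hSΓ _ hg' _ (Γ.inv_mem hγ₀)
    simpa [mul_assoc] using this
  have main : Reachable Γ Nm Np S (g * u) (g * u * l) := by
    rcases hu with hu | hu
    · have e : g * l * (l⁻¹ * u * l) = g * u * l := by group
      have hc : l⁻¹ * u * l ∈ (↑Nm ∪ ↑Np : Set G) := by
        rcases hu with hu | hu
        · left
          simpa using hnormm _ (L.inv_mem hl) _ hu
        · right
          simpa using hnormp _ (L.inv_mem hl) _ hu
      have hi : u⁻¹ ∈ (↑Nm ∪ ↑Np : Set G) := by
        rcases hu with hu | hu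
        · exact Or.inl (Nm.inv_mem hu)
        · exact Or.inr (Np.inv_mem hu)
      have h3 := h.aux_snoc hSΓ hc (by rw [e]; exact hSL _ hgu _ hl)
      rw [e] at h3
      exact Reachable.aux_cons hi hgu (by simpa using h3)
    · have h3 := h.aux_right hnormm hnormp hSL (hAL hu)
      rwa [mul_assoc g l u, ← hAcentral u hu l hl, ← mul_assoc] at h3
  have := main.aux_left hSΓ hγ₀
  simpa [mul_assoc] using this

/-- If `A` is a subgroup of the center of `L`, `γ₀ ∈ Γ`, `u ∈ N⁻ ∪ N⁺ ∪ A`, `g ∈ S` and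
`γ₀·g·u ∈ S`, then `H(g) = H(γ₀·g·u)`: the transitivity set is unchanged when the base
point is moved by an element of `Γ` on the left and of `N⁻ ∪ N⁺ ∪ A` on the right. -/
theorem transitivity_set_base_point_change {G : Type*} [Group G]
    (Γ Nm Np L A : Subgroup G) (S : Set G)
    (hnormm : ∀ l ∈ L, ∀ n ∈ Nm, l * n * l⁻¹ ∈ Nm)
    (hnormp : ∀ l ∈ L, ∀ n ∈ Np, l * n * l⁻¹ ∈ Np)
    (hSΓ : ∀ s ∈ S, ∀ γ ∈ Γ, γ * s ∈ S)
    (hSL : ∀ s ∈ S, ∀ l ∈ L, s * l ∈ S)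
    (hAL : A ≤ L) (hAcentral : ∀ a ∈ A, ∀ l ∈ L, a * l = l * a)
    (γ₀ : G) (hγ₀ : γ₀ ∈ Γ) (u : G) (hu : u ∈ (↑Nm ∪ ↑Np ∪ ↑A : Set G))
    (g : G) (hg : g ∈ S) (hg' : γ₀ * g * u ∈ S) :
    {l : G | l ∈ L ∧ Reachable Γ Nm Np S g (g * l)} =
      {l : G | l ∈ L ∧ Reachable Γ Nm Np S (γ₀ * g * u) (γ₀ * g * u * l)} := by
  ext l
  refine and_congr_right fun hl => ⟨fun h => ?_, fun h => ?_⟩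
  · exact transitivity_aux Γ Nm Np L A S hnormm hnormp hSΓ hSL hAL hAcentral γ₀ hγ₀ u hu g hg' l hl h
  · have hi : u⁻¹ ∈ (↑Nm ∪ ↑Np ∪ ↑A : Set G) := by
      rcases hu with (hu | hu) | hu
      · exact Or.inl (Or.inl (Nm.inv_mem hu))
      · exact Or.inl (Or.inr (Np.inv_mem hu))
      · exact Or.inr (A.inv_mem hu)
    have e : γ₀⁻¹ * (γ₀ * g * u) * u⁻¹ = g := by group
    have := transitivity_aux Γ Nm Np L A S hnormm hnormp hSΓ hSL hAL hAcentral γ₀⁻¹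
      (Γ.inv_mem hγ₀) u⁻¹ hi (γ₀ * g * u) (by rwa [e]) l hl h
    rwa [e] at this
end

section
/- For every g ∈ S and every m ∈ L (so that g·m ∈ S), one has H(g·m) = m⁻¹·H(g)·m. -/
theorem Reachable.mul_right_aux {G : Type*} [Group G]
    (Γ Nm Np L : Subgroup G) (S : Set G)
    (hnormm : ∀ l ∈ L, ∀ n ∈ Nm, l * n * l⁻¹ ∈ Nm)
    (hnormp : ∀ l ∈ L, ∀ n ∈ Np, l * n * l⁻¹ ∈ Np)
    (hSL : ∀ s ∈ S, ∀ l ∈ L, s * l ∈ S)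
    (g g' m : G) (hm : m ∈ L) (h : Reachable Γ Nm Np S g g') :
    Reachable Γ Nm Np S (g * m) (g' * m) := by
  obtain ⟨hs, h1, h2, γ, hγ, h3⟩ := h
  have key : ∀ l : List G, g * m * (l.map (MulAut.conj m⁻¹)).prod = g * l.prod * m := by
    intro l
    rw [← map_list_prod, MulAut.conj_apply]
    group
  refine ⟨hs.map (MulAut.conj m⁻¹), ?_, ?_, γ, hγ, ?_⟩
  · intro h hh
    obtain ⟨x, hx, rfl⟩ := List.mem_map.1 hh
    rw [MulAut.conj_apply]
    rcases h1 x hx with h | h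
    · exact Or.inl (hnormm _ (L.inv_mem hm) _ h)
    · exact Or.inr (hnormp _ (L.inv_mem hm) _ h)
  · intro r hr
    rw [← List.map_take, key]
    exact hSL _ (h2 r (by simpa using hr)) m hm
  · rw [key, ← h3, mul_assoc γ]

/-- For every `g ∈ S` and every `m ∈ L` (so that `g·m ∈ S`), one has
`H(g·m) = m⁻¹·H(g)·m`. -/
theorem transitivity_set_conjugation {G : Type*} [Group G]
    (Γ Nm Np L : Subgroup G) (S : Set G)
    (hnormm : ∀ l ∈ L, ∀ n ∈ Nm, l * n * l⁻¹ ∈ Nm)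
    (hnormp : ∀ l ∈ L, ∀ n ∈ Np, l * n * l⁻¹ ∈ Np)
    (hSΓ : ∀ s ∈ S, ∀ γ ∈ Γ, γ * s ∈ S)
    (hSL : ∀ s ∈ S, ∀ l ∈ L, s * l ∈ S)
    (g : G) (hg : g ∈ S) (m : G) (hm : m ∈ L) :
    {l : G | l ∈ L ∧ Reachable Γ Nm Np S (g * m) (g * m * l)} =
      (fun l => m⁻¹ * l * m) '' {l : G | l ∈ L ∧ Reachable Γ Nm Np S g (g * l)} := by
  ext l
  constructor
  · rintro ⟨hl, h⟩
    refine ⟨m * l * m⁻¹, ⟨L.mul_mem (L.mul_mem hm hl) (L.inv_mem hm), ?_⟩, by group⟩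
    have := Reachable.mul_right_aux Γ Nm Np L S hnormm hnormp hSL _ _ m⁻¹ (L.inv_mem hm) h
    simpa [mul_assoc] using this
  · rintro ⟨k, ⟨hk, h⟩, rfl⟩
    refine ⟨L.mul_mem (L.mul_mem (L.inv_mem hm) hk) hm, ?_⟩
    have := Reachable.mul_right_aux Γ Nm Np L S hnormm hnormp hSL _ _ m hm h
    simpa [mul_assoc] using this
end

section
/- Let g ∈ S, γ ∈ Γ, h ∈ N⁺, l ∈ L and n ∈ N⁻ be such that γ·g = g·h·l·n and g·n⁻¹ ∈ S. Then l ∈ H(g). (In the paper's notation: if g⁻¹γg has Bruhat decomposition h·m·a·n with h ∈ N⁺, ma ∈ MA, n ∈ N⁻, then ma belongs to the transitivity group, so ζ_M(g⁻¹Γg ∩ W) is contained in the weak transitivity group H^w_Γ(g).) -/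
/-- If `γ·g = g·h·l·n` with `γ ∈ Γ`, `h ∈ N⁺`, `l ∈ L`, `n ∈ N⁻`, and `g·n⁻¹ ∈ S`,
then `l` belongs to the transitivity set `H(g)`; i.e. the Levi components of Bruhat
decompositions of elements of `g⁻¹Γg` lie in the (weak) transitivity group. -/
theorem bruhat_levi_component_in_transitivity_set {G : Type*} [Group G]
    (Γ Nm Np L : Subgroup G) (S : Set G)
    (hnormm : ∀ l ∈ L, ∀ n ∈ Nm, l * n * l⁻¹ ∈ Nm)
    (hnormp : ∀ l ∈ L, ∀ n ∈ Np, l * n * l⁻¹ ∈ Np)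
    (hSΓ : ∀ s ∈ S, ∀ γ ∈ Γ, γ * s ∈ S)
    (hSL : ∀ s ∈ S, ∀ l ∈ L, s * l ∈ S)
    (g : G) (hg : g ∈ S)
    (γ : G) (hγ : γ ∈ Γ) (h : G) (hh : h ∈ Np) (l : G) (hl : l ∈ L)
    (n : G) (hn : n ∈ Nm)
    (hBruhat : γ * g = g * h * l * n) (hgn : g * n⁻¹ ∈ S) :
    l ∈ L ∧ Reachable Γ Nm Np S g (g * l) := by
  have key : γ * (g * (n⁻¹ * (l⁻¹ * h⁻¹ * l))) = g * l := by
    rw [← mul_assoc, hBruhat]; group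
  have hk : g * (n⁻¹ * (l⁻¹ * h⁻¹ * l)) ∈ S := by
    have h1 := hSΓ _ (hSL g hg l hl) γ⁻¹ (Γ.inv_mem hγ)
    rwa [← key, inv_mul_cancel_left] at h1
  refine ⟨hl, [n⁻¹, l⁻¹ * h⁻¹ * l], ?_, ?_, γ, hγ, ?_⟩
  · intro x hx
    simp only [List.mem_cons, List.not_mem_nil, or_false] at hx
    rcases hx with rfl | rfl
    · exact Or.inl (Nm.inv_mem hn)
    · right
      have := hnormp l⁻¹ (L.inv_mem hl) h⁻¹ (Np.inv_mem hh)
      rwa [inv_inv] at this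
  · intro r hr
    have hr' : r ≤ 2 := hr
    interval_cases r
    · simpa using hg
    · simpa using hgn
    · simpa using hk
  · simpa using key
end

section
/- Let k ≥ 1 and let a : ℝᵏ → ℝᵏ be the diagonal linear map a(x)ᵢ = αᵢ·xᵢ, where each αᵢ ≥ α for some constant α > 1. Let m : ℝᵏ → ℝᵏ be an orthogonal linear map commuting with a. Let Λ ⊆ ℝᵏ be a set such that (m∘a)⁻¹(y) ∈ Λ whenever y ∈ Λ. Let q₀, q₁, …, q_w : ℝᵏ → ℝ be continuous functions and 0 < β₀ < βᵢ (for every 1 ≤ i ≤ w) be real numbers such that qᵢ(a(x)) = βᵢ·qᵢ(x) for all x ∈ ℝᵏ and all 0 ≤ i ≤ w. Suppose there are constants C ≥ 0, ε > 0 and s > 0 with β₀ < α^s, such that |q₀(x) + q₁(x) + ⋯ + q_w(x)| ≤ C·‖x‖^s for every x ∈ Λ with ‖x‖ < ε. Then q₀(y) = 0 for every y ∈ Λ. -/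
open scoped Real

/-- The core analytic argument of Proposition 4.5: if `Λ ⊆ ℝᵏ` is invariant under
`(m∘a)⁻¹`, where `a` is diagonal with all eigenvalues `αᵢ ≥ α > 1` and `m` is an
orthogonal map commuting with `a`, and if the sum of eigenfunctions
`q₀ + ⋯ + q_w` (with `q i ∘ a = β i • q i`, `0 < β 0 < β i` for `i ≠ 0`) satisfies
`|∑ qᵢ(x)| ≤ C‖x‖^s` near `0` on `Λ` with `β₀ < α^s`, then `q₀` vanishes on `Λ`. -/
theorem lowest_eigenfunction_vanishes_on_limit_set
    (k : ℕ) (hk : 1 ≤ k)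
    (α : ℝ) (hα : 1 < α) (αs : Fin k → ℝ) (hαs : ∀ i, α ≤ αs i)
    (a : EuclideanSpace ℝ (Fin k) ≃ₗ[ℝ] EuclideanSpace ℝ (Fin k))
    (ha : ∀ x i, a x i = αs i * x i)
    (m : EuclideanSpace ℝ (Fin k) ≃ₗᵢ[ℝ] EuclideanSpace ℝ (Fin k))
    (hcomm : ∀ x, m (a x) = a (m x))
    (Λ : Set (EuclideanSpace ℝ (Fin k)))
    (hΛ : ∀ y ∈ Λ, a.symm (m.symm y) ∈ Λ)
    (w : ℕ) (q : Fin (w + 1) → EuclideanSpace ℝ (Fin k) → ℝ)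
    (hqcont : ∀ i, Continuous (q i))
    (β : Fin (w + 1) → ℝ) (hβ0 : 0 < β 0) (hβ : ∀ i, i ≠ 0 → β 0 < β i)
    (heig : ∀ i x, q i (a x) = β i * q i x)
    (C ε s : ℝ) (hC : 0 ≤ C) (hε : 0 < ε) (hs : 0 < s) (hβα : β 0 < α ^ s)
    (hbound : ∀ x ∈ Λ, ‖x‖ < ε → |∑ i, q i x| ≤ C * ‖x‖ ^ s) :
    ∀ y ∈ Λ, q 0 y = 0 := by
  intro y hy
  have hα0 : 0 < α := by linarith
  -- the two orbits
  let z : ℕ → EuclideanSpace ℝ (Fin k) := fun r => (fun v => m.symm v)^[r] y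
  let x : ℕ → EuclideanSpace ℝ (Fin k) := fun r => (fun v => a.symm (m.symm v))^[r] y
  have hz1 : ∀ r, z (r+1) = m.symm (z r) := fun r => Function.iterate_succ_apply' _ _ _
  have hx1 : ∀ r, x (r+1) = a.symm (m.symm (x r)) := fun r => Function.iterate_succ_apply' _ _ _
  have hxΛ : ∀ r, x r ∈ Λ := by
    intro r
    induction r with
    | zero => exact hy
    | succ r ih => rw [hx1]; exact hΛ _ ih
  have hcs : ∀ v, a (m.symm v) = m.symm (a v) := by
    intro v
    apply m.injective
    rw [hcomm]; simp
  have hcr : ∀ r v, a^[r] (m.symm v) = m.symm (a^[r] v) := by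
    intro r
    induction r with
    | zero => intro v; rfl
    | succ r ih => intro v; rw [Function.iterate_succ_apply, Function.iterate_succ_apply, hcs, ih]
  have haz : ∀ r, a^[r] (x r) = z r := by
    intro r
    induction r with
    | zero => rfl
    | succ r ih =>
      rw [Function.iterate_succ_apply, hx1, LinearEquiv.apply_symm_apply, hcr, ih, hz1]
  have hznorm : ∀ r, ‖z r‖ = ‖y‖ := by
    intro r
    induction r with
    | zero => rfl
    | succ r ih => rw [hz1, LinearIsometryEquiv.norm_map, ih]
  have hna : ∀ v, α * ‖v‖ ≤ ‖a v‖ := by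
    intro v
    rw [← abs_of_pos hα0, ← Real.norm_eq_abs, ← norm_smul, EuclideanSpace.norm_eq, EuclideanSpace.norm_eq]
    apply Real.sqrt_le_sqrt
    apply Finset.sum_le_sum
    intro i _
    rw [ha]
    simp only [PiLp.smul_apply, smul_eq_mul, norm_mul, Real.norm_eq_abs]
    have := hαs i
    rw [abs_of_pos hα0, abs_of_pos (by linarith : 0 < αs i)]
    gcongr
  have hnar : ∀ r v, α ^ r * ‖v‖ ≤ ‖a^[r] v‖ := by
    intro r
    induction r with
    | zero => intro v; simp
    | succ r ih =>
      intro v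
      rw [Function.iterate_succ_apply, pow_succ, mul_assoc]
      exact (mul_le_mul_of_nonneg_left (hna v) (by positivity)).trans (ih _)
  have hxn : ∀ r, ‖x r‖ ≤ ‖y‖ * (α⁻¹) ^ r := by
    intro r
    have h := hnar r (x r)
    rw [haz, hznorm] at h
    rw [inv_pow, ← div_eq_mul_inv, le_div_iff₀ (by positivity)]
    linarith
  have hqr : ∀ i r v, q i (a^[r] v) = β i ^ r * q i v := by
    intro i r
    induction r with
    | zero => intro v; simp
    | succ r ih => intro v; rw [Function.iterate_succ_apply, ih, heig]; ring
  have hqz : ∀ i r, q i (z r) = β i ^ r * q i (x r) := by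
    intro i r; rw [← haz, hqr]
  -- convergence to zero
  have hsmall : ∀ᶠ r in Filter.atTop, ‖x r‖ < ε := by
    have h : Filter.Tendsto (fun r : ℕ => ‖y‖ * (α⁻¹) ^ r) Filter.atTop (nhds (‖y‖ * 0)) :=
      (tendsto_pow_atTop_nhds_zero_of_lt_one (by positivity) (inv_lt_one_of_one_lt₀ hα)).const_mul _
    rw [mul_zero] at h
    filter_upwards [h.eventually (gt_mem_nhds hε)] with r hr
    exact (hxn r).trans_lt hr
  have hαs0 : 0 < α ^ s := Real.rpow_pos_of_pos hα0 s
  have hT1 : Filter.Tendsto (fun r : ℕ => β 0 ^ r * ∑ i, q i (x r)) Filter.atTop (nhds 0) := by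
    have h : Filter.Tendsto (fun r : ℕ => (C * ‖y‖ ^ s) * (β 0 / α ^ s) ^ r) Filter.atTop
        (nhds ((C * ‖y‖ ^ s) * 0)) :=
      (tendsto_pow_atTop_nhds_zero_of_lt_one (by positivity)
        ((div_lt_one hαs0).2 hβα)).const_mul _
    rw [mul_zero] at h
    refine squeeze_zero_norm' ?_ h
    filter_upwards [hsmall] with r hr
    rw [norm_mul, Real.norm_eq_abs, Real.norm_eq_abs, abs_of_pos (pow_pos hβ0 r)]
    have h1 := hbound _ (hxΛ r) hr
    have h2 : ‖x r‖ ^ s ≤ ‖y‖ ^ s * ((α ^ s)⁻¹) ^ r := by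
      calc ‖x r‖ ^ s ≤ (‖y‖ * (α⁻¹) ^ r) ^ s :=
            Real.rpow_le_rpow (norm_nonneg _) (hxn r) hs.le
        _ = ‖y‖ ^ s * ((α ^ s)⁻¹) ^ r := by
            rw [Real.mul_rpow (norm_nonneg _) (by positivity), ← Real.rpow_pow_comm (by positivity),
              Real.inv_rpow hα0.le]
    calc β 0 ^ r * |∑ i, q i (x r)| ≤ β 0 ^ r * (C * (‖y‖ ^ s * ((α ^ s)⁻¹) ^ r)) := by
          gcongr
          exact h1.trans (by gcongr)
      _ = _ := by rw [div_eq_mul_inv, mul_pow]; ring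
  have hT2 : ∀ i : Fin w, Filter.Tendsto (fun r : ℕ => β 0 ^ r * q i.succ (x r)) Filter.atTop
      (nhds 0) := by
    intro i
    have hβi := hβ i.succ (Fin.succ_ne_zero i)
    have hβip : 0 < β i.succ := hβ0.trans hβi
    obtain ⟨M, hM⟩ := (isCompact_closedBall (0 : EuclideanSpace ℝ (Fin k)) ‖y‖).exists_bound_of_continuousOn
      (hqcont i.succ).continuousOn
    have h : Filter.Tendsto (fun r : ℕ => M * (β 0 / β i.succ) ^ r) Filter.atTop
        (nhds (M * 0)) :=
      (tendsto_pow_atTop_nhds_zero_of_lt_one (by positivity)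
        ((div_lt_one hβip).2 hβi)).const_mul _
    rw [mul_zero] at h
    refine squeeze_zero_norm (fun r => ?_) h
    have h1 := hM (z r) (by simp [hznorm])
    have h2 : β 0 ^ r * q i.succ (x r) = q i.succ (z r) * (β 0 / β i.succ) ^ r := by
      rw [hqz, div_pow]; field_simp
    rw [h2, norm_mul, Real.norm_of_nonneg (by positivity : 0 ≤ (β 0 / β i.succ) ^ r)]
    gcongr
  have hT : Filter.Tendsto (fun r : ℕ => q 0 (z r)) Filter.atTop (nhds 0) := by
    have h := hT1.sub (tendsto_finsetSum Finset.univ (fun i _ => hT2 i))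
    simp only [Finset.sum_const_zero, sub_zero] at h
    refine h.congr (fun r => ?_)
    rw [hqz, Fin.sum_univ_succ, mul_add, Finset.mul_sum]
    ring
  -- recurrence
  have hdist : ∀ n r, dist (z (n + r)) (z n) = dist (z r) y := by
    intro n r
    induction n with
    | zero => rw [Nat.zero_add]; rfl
    | succ n ih =>
      rw [Nat.add_right_comm, hz1, hz1, LinearIsometryEquiv.dist_map, ih]
  have hrec : ∀ δ > 0, ∀ R : ℕ, ∃ r ≥ R, dist (z r) y < δ := by
    intro δ hδ R
    obtain ⟨l, -, φ, hφ, hl⟩ := (isCompact_closedBall (0 : EuclideanSpace ℝ (Fin k)) ‖y‖).tendsto_subseq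
      (x := z) (fun r => by simp [hznorm])
    obtain ⟨N, hN⟩ := Metric.cauchySeq_iff'.1 hl.cauchySeq δ hδ
    have h1 := hN (N + R) (by omega)
    have h2 : R + φ N ≤ φ (R + N) := hφ.add_le_nat R N
    refine ⟨φ (R + N) - φ N, by omega, ?_⟩
    rw [← hdist (φ N), Nat.add_sub_cancel' (by omega), add_comm R N]
    exact h1
  by_contra hne
  have hp : 0 < |q 0 y| / 2 := by positivity
  obtain ⟨δ, hδ, hδ'⟩ := Metric.continuous_iff.1 (hqcont 0) y _ hp
  obtain ⟨R, hR⟩ := Metric.tendsto_atTop.1 hT _ hp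
  obtain ⟨r, hr, hr'⟩ := hrec δ hδ R
  have h1 := hδ' _ hr'
  have h2 := hR r hr
  rw [Real.dist_eq] at h1 h2
  rw [sub_zero] at h2
  rw [abs_sub_comm] at h1
  have h3 := abs_sub_abs_le_abs_sub (q 0 y) (q 0 (z r))
  linarith
end
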